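/- Let n ≥ 3 and let ω be a skew-symmetric bilinear form on V such that H_V is contained in the kernel of the convolution operator Q_ω on ⋀^{n-1}V. Then there exists a real number a such that ω(v_i, v_{i+1}) = (−1)^i·a for all 1 ≤ i ≤ 2n−3, and ω(v_i, v_j) = 0 for all j > i+1. -/

import Mathlib

open scoped Classical

noncomputable section

/-- `P` is a set partition of the finite ground set `G` (of integers): its blocks are nonempty
subsets of `G`, and every element of `G` lies in exactly one block. -/
def IsPartitionOf (G : Finset ℕ) (P : Finset (Finset ℕ)) : Prop :=
  (∀ B ∈ P, B.Nonempty) ∧ (∀ B ∈ P, B ⊆ G) ∧ ∀ x ∈ G, ∃! B, B ∈ P ∧ x ∈ B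

/-- A collection of blocks is non-crossing: there are no `a < b < c < d` with `a, c` in one
block and `b, d` in a different block. -/
def NonCrossing (P : Finset (Finset ℕ)) : Prop :=
  ∀ a b c d : ℕ, a < b → b < c → c < d →
    ∀ B₁ ∈ P, ∀ B₂ ∈ P, a ∈ B₁ → c ∈ B₁ → b ∈ B₂ → d ∈ B₂ → B₁ = B₂

/-- The set `{1, 3, …, 2n-1}` of "barred" boundary indices `k̄ = 2k-1`. -/
def oddSet (n : ℕ) : Finset ℕ := (Finset.range n).image fun k => 2 * k + 1

/-- The set `{2, 4, …, 2n}` of "tilde" boundary indices `k̃ = 2k`. -/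
def evenSet (n : ℕ) : Finset ℕ := (Finset.range n).image fun k => 2 * k + 2

/-- `σ` is a non-crossing partition of `{1̄,…,n̄}` and `σd` is its dual: a non-crossing
partition of `{1̃,…,ñ}` such that the merged partition `σ ∪ σd` is non-crossing and the
numbers of blocks add up to `n + 1`. -/
def IsNCPair (n : ℕ) (σ σd : Finset (Finset ℕ)) : Prop :=
  IsPartitionOf (oddSet n) σ ∧ NonCrossing σ ∧
    IsPartitionOf (evenSet n) σd ∧ NonCrossing σd ∧
    NonCrossing (σ ∪ σd) ∧ σ.card + σd.card = n + 1

/-- An `(n-1)`-element subset `I ⊆ {1,…,2n}` is concordant with `σ` if every block of `σ`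
and every block of the dual `σd` contains exactly one element not in `I`. -/
def ConcordantWith (σ σd : Finset (Finset ℕ)) (I : Finset ℕ) : Prop :=
  ∀ B ∈ σ ∪ σd, (B \ I).card = 1

/-- `stdE n i` is the `i`-th standard basis vector (1-indexed) of `ℝ^{2n}`. -/
def stdE (n i : ℕ) : Fin (2 * n) → ℝ := fun t => if (t : ℕ) + 1 = i then 1 else 0

/-- The wedge `e_{i_1} ∧ … ∧ e_{i_k}` over the increasing enumeration `i_1 < … < i_k`
of a finite set `I` of (1-indexed) indices. -/
def finsetWedge (n k : ℕ) (I : Finset ℕ) : ExteriorAlgebra ℝ (Fin (2 * n) → ℝ) :=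
  ExteriorAlgebra.ιMulti ℝ k fun p => stdE n ((I.sort (· ≤ ·)).getD p.val 0)

/-- The concordance vector `w_σ = Σ_I e_I ∈ ⋀^{n-1} ℝ^{2n}`, the sum over all
`(n-1)`-element subsets `I` of `{1,…,2n}` concordant with `σ`. -/
def concVec (n : ℕ) (σ σd : Finset (Finset ℕ)) : ExteriorAlgebra ℝ (Fin (2 * n) → ℝ) :=
  ∑ I ∈ ((Finset.Icc 1 (2 * n)).powersetCard (n - 1)).filter (ConcordantWith σ σd),
    finsetWedge n (n - 1) I

end
noncomputable section

/-- The subspace `V = {v ∈ ℝ^{2n} : Σ_{i=1}^n (-1)^i v_{2i} = 0, Σ_{i=1}^n (-1)^i v_{2i-1} = 0}`. -/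
def Vsub (n : ℕ) : Submodule ℝ (Fin (2 * n) → ℝ) :=
  LinearMap.ker (∑ k : Fin n, ((-1 : ℝ)) ^ (k.val + 1) •
      (LinearMap.proj (⟨2 * k.val + 1, by have := k.isLt; omega⟩ : Fin (2 * n)) :
        (Fin (2 * n) → ℝ) →ₗ[ℝ] ℝ)) ⊓
  LinearMap.ker (∑ k : Fin n, ((-1 : ℝ)) ^ (k.val + 1) •
      (LinearMap.proj (⟨2 * k.val, by have := k.isLt; omega⟩ : Fin (2 * n)) :
        (Fin (2 * n) → ℝ) →ₗ[ℝ] ℝ))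

/-- The basis vectors `v_k = e_k + e_{k+2}`, `k = 1, …, 2n-2`, of the subspace `V`. -/
def vVec (n k : ℕ) : Fin (2 * n) → ℝ := stdE n k + stdE n (k + 2)

/-- The wedge `x_1 ∧ … ∧ x_k` of vectors of a module, as an element of the `k`-th exterior
power (a submodule of the exterior algebra). -/
def wedgeIn (k : ℕ) {M : Type*} [AddCommGroup M] [Module ℝ M] (x : Fin k → M) :
    ↥(⋀[ℝ]^k M) :=
  ⟨ExteriorAlgebra.ιMulti ℝ k x, ExteriorAlgebra.ιMulti_range ℝ k (Set.mem_range_self x)⟩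

/-- The subspace `H_V ⊆ ⋀^{n-1} V`: the span of the preimages in `⋀^{n-1} V` of the
concordance vectors `w_σ ∈ ⋀^{n-1} ℝ^{2n}` under the map induced by the inclusion `V ⊆ ℝ^{2n}`. -/
def HV (n : ℕ) : Submodule ℝ ↥(⋀[ℝ]^(n - 1) ↥(Vsub n)) :=
  Submodule.span ℝ {y | ∃ σ σd : Finset (Finset ℕ), IsNCPair n σ σd ∧
    ExteriorAlgebra.map ((Vsub n).subtype) (y : ExteriorAlgebra ℝ ↥(Vsub n)) = concVec n σ σd}

end

/-!
For a non-crossing partition whose merged partition `(σ|σ̃)` has only two nontrivial blocks, the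
concordance vector factors as a wedge `x₁ ∧ … ∧ x_{n-1}` of vectors of `V`. Multiplying
`Q_ω(x₁ ∧ … ∧ x_{n-1}) = 0` by `x_p ∧ x_q` leaves only the term with coefficient `± ω(x_p, x_q)`,
so these vectors span an `ω`-isotropic subspace. If the two blocks are separated intervals of
opposite parity, the factors are vectors `v_i`; if one block is a pair `{i+1, i+3}` nested in the
other, two of the factors are `v_i - v_{i+2}` and `v_{i+1}`. The first kind, and the remaining
factors of the second, give `ω(v_i, v_j) = 0` for `j > i + 1`; the relation
`ω(v_i - v_{i+2}, v_{i+1}) = 0` together with skew-symmetry gives the alternating signs.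
-/

section ListWedge

variable {R M α : Type*} [CommRing R] [AddCommGroup M] [Module R M]

/-- The wedge `x₁ ∧ … ∧ x_k` of a list of vectors, as an element of the exterior algebra. -/
def listWedge (R : Type*) {M : Type*} [CommRing R] [AddCommGroup M] [Module R M]
    (X : List M) : ExteriorAlgebra R M :=
  (X.map (ExteriorAlgebra.ι R)).prod

@[simp]
lemma listWedge_cons (x : M) (X : List M) :
    listWedge R (x :: X) = ExteriorAlgebra.ι R x * listWedge R X := rfl

lemma listWedge_append (X Y : List M) :
    listWedge R (X ++ Y) = listWedge R X * listWedge R Y := by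
  simp [listWedge]

lemma listWedge_ofFn {k : ℕ} (x : Fin k → M) :
    listWedge R (List.ofFn x) = ExteriorAlgebra.ιMulti R k x := by
  rw [listWedge, List.map_ofFn, ExteriorAlgebra.ιMulti_apply, Function.comp_def]

lemma ιMulti_getD_eq_listWedge_map {k : ℕ} (f : α → M) (X : List α) (hX : X.length = k) (d : α) :
    ExteriorAlgebra.ιMulti R k (fun p => f (X.getD p.val d)) = listWedge R (X.map f) := by
  rw [← listWedge_ofFn]
  congr 1
  apply List.ext_getElem <;> simp +contextual [hX]

lemma map_listWedge {N : Type*} [AddCommGroup N] [Module R N] (f : M →ₗ[R] N) (X : List M) :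
    ExteriorAlgebra.map f (listWedge R X) = listWedge R (X.map f) := by
  simp [listWedge, map_list_prod, Function.comp_def]

lemma listWedge_eq_zero_of_not_nodup {X : List M} (hX : ¬ X.Nodup) : listWedge R X = 0 := by
  rw [← List.ofFn_get X, listWedge_ofFn]
  exact ExteriorAlgebra.ιMulti_eq_zero_of_not_inj (mt List.nodup_iff_injective_get.mpr hX)

lemma listWedge_eq_or_eq_neg_of_perm {X Y : List M} (h : X.Perm Y) :
    listWedge R X = listWedge R Y ∨ listWedge R X = -listWedge R Y := by
  induction h with
  | nil => exact .inl rfl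
  | cons x _ ih =>
    rcases ih with ih | ih
    · exact .inl (by simp [ih])
    · exact .inr (by simp [ih])
  | swap x y X =>
    refine .inr ?_
    rw [listWedge_cons, listWedge_cons, listWedge_cons, listWedge_cons, ← mul_assoc, ← mul_assoc,
      eq_neg_of_add_eq_zero_left (ExteriorAlgebra.ι_add_mul_swap y x), neg_mul]
  | trans _ _ ih₁ ih₂ =>
    rcases ih₁ with ih₁ | ih₁ <;> rcases ih₂ with ih₂ | ih₂ <;> simp [ih₁, ih₂]

lemma listWedge_ofFn_basis_ne_zero [Nontrivial R] {k : ℕ} (b : Module.Basis (Fin k) R M) :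
    listWedge R (List.ofFn b) ≠ 0 := by
  rw [listWedge_ofFn]
  intro hzero
  have hdet : exteriorPower.alternatingMapLinearEquiv b.det (exteriorPower.ιMulti R k b) = 1 := by
    rw [exteriorPower.alternatingMapLinearEquiv_apply_ιMulti, b.det_self]
  have hιMulti : exteriorPower.ιMulti R k b = 0 := Subtype.ext hzero
  rw [hιMulti, map_zero] at hdet
  exact zero_ne_one hdet

end ListWedge

section Contraction

variable {R M : Type*} [CommRing R] [AddCommGroup M] [Module R M]

lemma getElem_mem_eraseIdx_eraseIdx {α : Type*} {X : List α} {p q r : ℕ} (hpq : p < q)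
    (hr : r < X.length) (hrp : r ≠ p) (hrq : r ≠ q) : X[r] ∈ (X.eraseIdx q).eraseIdx p := by
  rw [List.mem_eraseIdx_iff_getElem]
  rcases lt_or_gt_of_ne hrq with h | h
  · exact ⟨r, by grind, hrp, by grind⟩
  · exact ⟨r - 1, by grind, by omega, by grind⟩

lemma getElem_cons_getElem_cons_eraseIdx_eraseIdx_perm {α : Type*} {X : List α} {p q : ℕ}
    (hpq : p < q) (hq : q < X.length) :
    (X[p] :: X[q] :: (X.eraseIdx q).eraseIdx p).Perm X := by
  have hp : p < (X.eraseIdx q).length := by grind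
  have hXp : (X.eraseIdx q)[p] = X[p] := by grind
  calc (X[p] :: X[q] :: (X.eraseIdx q).eraseIdx p).Perm
        (X[q] :: (X.eraseIdx q)[p] :: (X.eraseIdx q).eraseIdx p) := by rw [hXp]; exact .swap ..
    _ |>.Perm (X[q] :: X.eraseIdx q) := .cons _ (List.getElem_cons_eraseIdx_perm hp)
    _ |>.Perm X := List.getElem_cons_eraseIdx_perm hq

lemma listWedge_getElem_cons_getElem_cons_eraseIdx_eraseIdx_eq_zero {X : List M} {p q p' q' : ℕ}
    (hpq : p < q) (hq : q < X.length) (hpq' : p' < q') (hne : p' ≠ p ∨ q' ≠ q) :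
    listWedge R (X[p] :: X[q] :: (X.eraseIdx q').eraseIdx p') = 0 := by
  apply listWedge_eq_zero_of_not_nodup
  have hretained : (p ≠ p' ∧ p ≠ q') ∨ (q ≠ p' ∧ q ≠ q') := by omega
  rcases hretained with ⟨hp, hq'⟩ | ⟨hp, hq'⟩
  · simp [getElem_mem_eraseIdx_eraseIdx hpq' (hpq.trans hq) hp hq']
  · simp [getElem_mem_eraseIdx_eraseIdx hpq' hq hp hq']

/-- Left multiplication by `x_p ∧ x_q` kills every term but the one omitting exactly `x_p, x_q`. -/
lemma smul_listWedge_eq_zero_of_sum_eq_zero {m : ℕ} {x : Fin m → M} {c : Fin m → Fin m → R}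
    (h : ∑ p, ∑ q, (if p < q then
      c p q • listWedge R (((List.ofFn x).eraseIdx q.val).eraseIdx p.val) else 0) = 0)
    {p q : Fin m} (hpq : p < q) : c p q • listWedge R (List.ofFn x) = 0 := by
  have hterm : ∀ p' q' : Fin m, p' < q' → (p' ≠ p ∨ q' ≠ q) →
      listWedge R (x p :: x q :: ((List.ofFn x).eraseIdx q'.val).eraseIdx p'.val) = 0 := by
    intro p' q' hpq' hne
    simpa using listWedge_getElem_cons_getElem_cons_eraseIdx_eraseIdx_eq_zero (R := R)
      (X := List.ofFn x) hpq (by simp) hpq' (by omega)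
  have hsum : c p q •
      listWedge R (x p :: x q :: ((List.ofFn x).eraseIdx q.val).eraseIdx p.val) = 0 := by
    have hmul := congrArg (fun w => ExteriorAlgebra.ι R (x p) * (ExteriorAlgebra.ι R (x q) * w)) h
    simp only [Finset.mul_sum, mul_ite, mul_zero, mul_smul_comm, ← listWedge_cons] at hmul
    rwa [Finset.sum_eq_single p, Finset.sum_eq_single q, if_pos hpq] at hmul
    · intro q' _ hq'
      split_ifs with hlt
      · rw [hterm p q' hlt (.inr hq'), smul_zero]
      · rfl
    · simp
    · intro p' _ hp'
      refine Finset.sum_eq_zero fun q' _ => ?_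
      split_ifs with hlt
      · rw [hterm p' q' hlt (.inl hp'), smul_zero]
      · rfl
    · simp
  have hpermutation : (x p :: x q :: ((List.ofFn x).eraseIdx q.val).eraseIdx p.val).Perm
      (List.ofFn x) := by
    simpa using getElem_cons_getElem_cons_eraseIdx_eraseIdx_perm (X := List.ofFn x) hpq (by simp)
  rcases listWedge_eq_or_eq_neg_of_perm (R := R) hpermutation with hperm | hperm
  · exact hperm ▸ hsum
  · exact neg_eq_zero.mp (by rw [← smul_neg, ← hperm]; exact hsum)

/-- `Q` is the convolution operator `Q_ω`. Positions are counted from `0`, which turns the sign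
`(-1)^(p+q-1)` of the 1-indexed formula into `(-1)^(p+q+1)`. -/
def IsConvolutionOperator {M : Type*} [AddCommGroup M] [Module ℝ M] {m k : ℕ}
    (ω : M →ₗ[ℝ] M →ₗ[ℝ] ℝ) (Q : ↥(⋀[ℝ]^m M) →ₗ[ℝ] ↥(⋀[ℝ]^k M)) : Prop :=
  ∀ x : Fin m → M, Q (wedgeIn m x) =
    ∑ p : Fin m, ∑ q : Fin m,
      if p < q then
        ((-1 : ℝ) ^ (p.val + q.val + 1) * ω (x p) (x q)) •
          wedgeIn k (fun r : Fin k =>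
            (((List.ofFn x).eraseIdx q.val).eraseIdx p.val).getD r.val 0)
      else 0

lemma IsConvolutionOperator.pairwise_eq_zero {M : Type*} [AddCommGroup M] [Module ℝ M] {k : ℕ}
    {ω : M →ₗ[ℝ] M →ₗ[ℝ] ℝ} {Q : ↥(⋀[ℝ]^(k + 2) M) →ₗ[ℝ] ↥(⋀[ℝ]^k M)}
    (hQ : IsConvolutionOperator ω Q) {x : Fin (k + 2) → M}
    (hx : ExteriorAlgebra.ιMulti ℝ (k + 2) x ≠ 0) (hzero : Q (wedgeIn (k + 2) x) = 0) :
    (List.ofFn x).Pairwise fun y z => ω y z = 0 := by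
  have hcoeff : ∀ p q : Fin (k + 2), p < q →
      ((-1 : ℝ) ^ (p.val + q.val + 1) * ω (x p) (x q)) • listWedge ℝ (List.ofFn x) = 0 := by
    intro p q
    refine smul_listWedge_eq_zero_of_sum_eq_zero
      (c := fun p q => (-1 : ℝ) ^ (p.val + q.val + 1) * ω (x p) (x q)) ?_
    refine Eq.trans ?_ (congrArg Subtype.val ((hQ x).symm.trans hzero))
    simp only [Submodule.coe_sum]
    refine Finset.sum_congr rfl fun p _ => Finset.sum_congr rfl fun q _ => ?_
    split_ifs with hpq
    · have hlength : (((List.ofFn x).eraseIdx q.val).eraseIdx p.val).length = k := by grind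
      simpa [wedgeIn] using congrArg (_ • ·) (ιMulti_getD_eq_listWedge_map id _ hlength 0).symm
    · rfl
  rw [← listWedge_ofFn] at hx
  rw [List.pairwise_ofFn]
  intro p q hpq
  simpa using (smul_eq_zero.mp (hcoeff p q hpq)).resolve_right hx

end Contraction

section SortedProd

variable {α A : Type*} [LinearOrder α]

/-- The product of `f i` over `i ∈ I`, taken in increasing order of `i`. -/
def sortedProd [Monoid A] (f : α → A) (I : Finset α) : A :=
  ((I.sort (· ≤ ·)).map f).prod

/-- The sum, over all ways of deleting one element of `I`, of the remaining sorted product. -/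
def deletionSum [Semiring A] (f : α → A) (I : Finset α) : A :=
  ∑ b ∈ I, sortedProd f (I.erase b)

lemma sort_union_of_lt {I J : Finset α} (h : ∀ a ∈ I, ∀ b ∈ J, a < b) :
    (I ∪ J).sort (· ≤ ·) = I.sort (· ≤ ·) ++ J.sort (· ≤ ·) := by
  have hlt : ∀ a ∈ I.sort (· ≤ ·), ∀ b ∈ J.sort (· ≤ ·), a < b := by simpa using h
  have hnodup : (I.sort (· ≤ ·) ++ J.sort (· ≤ ·)).Nodup :=
    List.nodup_append.mpr
      ⟨Finset.sort_nodup _ _, Finset.sort_nodup _ _, fun a ha b hb => (hlt a ha b hb).ne⟩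
  have hsorted : (I.sort (· ≤ ·) ++ J.sort (· ≤ ·)).Pairwise (· ≤ ·) :=
    List.pairwise_append.mpr
      ⟨Finset.pairwise_sort _ _, Finset.pairwise_sort _ _, fun a ha b hb => (hlt a ha b hb).le⟩
  simpa using (List.toFinset_sort (· ≤ ·) hnodup).mpr hsorted

@[simp]
lemma sortedProd_empty [Monoid A] (f : α → A) : sortedProd f ∅ = 1 := by
  simp [sortedProd]

@[simp]
lemma sortedProd_singleton [Monoid A] (f : α → A) (a : α) : sortedProd f {a} = f a := by
  simp [sortedProd]

lemma sortedProd_union [Monoid A] (f : α → A) {I J : Finset α} (h : ∀ a ∈ I, ∀ b ∈ J, a < b) :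
    sortedProd f (I ∪ J) = sortedProd f I * sortedProd f J := by
  simp [sortedProd, sort_union_of_lt h]

@[simp]
lemma deletionSum_empty [Semiring A] (f : α → A) : deletionSum f ∅ = 0 := rfl

@[simp]
lemma deletionSum_singleton [Semiring A] (f : α → A) (a : α) : deletionSum f {a} = 1 := by
  simp [deletionSum]

lemma disjoint_of_forall_lt {I J : Finset α} (h : ∀ a ∈ I, ∀ b ∈ J, a < b) : Disjoint I J :=
  Finset.disjoint_left.mpr fun a ha hb => lt_irrefl a (h a ha a hb)

lemma deletionSum_union [Semiring A] (f : α → A) {I J : Finset α}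
    (h : ∀ a ∈ I, ∀ b ∈ J, a < b) :
    deletionSum f (I ∪ J) =
      deletionSum f I * sortedProd f J + sortedProd f I * deletionSum f J := by
  have hdisj := disjoint_of_forall_lt h
  simp only [deletionSum, Finset.sum_union hdisj, Finset.sum_mul, Finset.mul_sum]
  congr 1 <;> refine Finset.sum_congr rfl fun b hb => ?_
  · rw [Finset.erase_union_distrib,
      Finset.erase_eq_of_notMem (Finset.disjoint_left.mp hdisj hb), sortedProd_union]
    exact fun a ha c hc => h a (Finset.mem_of_mem_erase ha) c hc
  · rw [Finset.erase_union_distrib,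
      Finset.erase_eq_of_notMem (Finset.disjoint_right.mp hdisj hb), sortedProd_union]
    exact fun a ha c hc => h a ha c (Finset.mem_of_mem_erase hc)

lemma sum_sortedProd_union_erase_nested [Semiring A] (f : α → A) {L B R : Finset α}
    (hLB : ∀ a ∈ L, ∀ b ∈ B, a < b) (hBR : ∀ a ∈ B, ∀ b ∈ R, a < b)
    (hLR : ∀ a ∈ L, ∀ b ∈ R, a < b) :
    ∑ b ∈ B, ∑ c ∈ L ∪ R, sortedProd f (B.erase b ∪ (L ∪ R).erase c) =
      deletionSum f L * deletionSum f B * sortedProd f R +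
        sortedProd f L * deletionSum f B * deletionSum f R := by
  have hterm : ∀ {L' B' R' : Finset α}, L' ⊆ L → B' ⊆ B → R' ⊆ R →
      sortedProd f (B' ∪ (L' ∪ R')) = sortedProd f L' * sortedProd f B' * sortedProd f R' := by
    intro L' B' R' hL hB hR
    rw [Finset.union_left_comm, sortedProd_union f, sortedProd_union f, mul_assoc]
    · exact fun a ha b hb => hBR a (hB ha) b (hR hb)
    · intro a ha b hb
      rcases Finset.mem_union.mp hb with hb | hb
      · exact hLB a (hL ha) b (hB hb)
      · exact hLR a (hL ha) b (hR hb)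
  have hdisj := disjoint_of_forall_lt hLR
  simp only [deletionSum, Finset.sum_union hdisj, Finset.sum_add_distrib]
  congr 1
  · rw [Finset.sum_comm, Finset.sum_mul_sum, Finset.sum_mul]
    refine Finset.sum_congr rfl fun c hc => ?_
    rw [Finset.sum_mul]
    refine Finset.sum_congr rfl fun b _ => ?_
    rw [Finset.erase_union_distrib, Finset.erase_eq_of_notMem (Finset.disjoint_left.mp hdisj hc),
      hterm (Finset.erase_subset _ _) (Finset.erase_subset _ _) subset_rfl]
  · rw [mul_assoc, Finset.sum_mul_sum, Finset.mul_sum]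
    refine Finset.sum_congr rfl fun b _ => ?_
    rw [Finset.mul_sum]
    refine Finset.sum_congr rfl fun c hc => ?_
    rw [Finset.erase_union_distrib, Finset.erase_eq_of_notMem (Finset.disjoint_right.mp hdisj hc),
      hterm subset_rfl (Finset.erase_subset _ _) (Finset.erase_subset _ _), mul_assoc]

end SortedProd

section ParityRun

/-- The run `s, s + 2, …, s + 2 (m - 1)` of `m` consecutive integers of one parity. -/
def parityRun (s m : ℕ) : Finset ℕ := (Finset.range m).image fun i => s + 2 * i

lemma mem_parityRun {s m x : ℕ} :
    x ∈ parityRun s m ↔ s ≤ x ∧ x < s + 2 * m ∧ x % 2 = s % 2 := by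
  simp only [parityRun, Finset.mem_image, Finset.mem_range]
  constructor
  · rintro ⟨i, hi, rfl⟩
    omega
  · exact fun hx => ⟨(x - s) / 2, by omega, by omega⟩

lemma card_parityRun (s m : ℕ) : (parityRun s m).card = m := by
  rw [parityRun, Finset.card_image_of_injective _ fun a b h => by simpa using h, Finset.card_range]

@[simp]
lemma parityRun_zero (s : ℕ) : parityRun s 0 = ∅ := rfl

lemma parityRun_succ (s m : ℕ) : parityRun s (m + 1) = parityRun s m ∪ {s + 2 * m} := by
  rw [parityRun, Finset.range_add_one, Finset.image_insert, Finset.insert_eq, Finset.union_comm,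
    parityRun]

lemma lt_of_mem_parityRun_of_mem_singleton (s m : ℕ) :
    ∀ a ∈ parityRun s m, ∀ b ∈ ({s + 2 * m} : Finset ℕ), a < b := by
  simp only [mem_parityRun, Finset.mem_singleton]
  omega

lemma sortedProd_parityRun_succ {A : Type*} [Monoid A] (f : ℕ → A) (s m : ℕ) :
    sortedProd f (parityRun s (m + 1)) = sortedProd f (parityRun s m) * f (s + 2 * m) := by
  rw [parityRun_succ, sortedProd_union f (lt_of_mem_parityRun_of_mem_singleton s m),
    sortedProd_singleton]

variable {A : Type*} [Semiring A]

/-- The product `(f s + f (s + 2)) (f (s + 2) + f (s + 4)) ⋯` with `m` factors. -/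
def adjacentSumProd (f : ℕ → A) (s m : ℕ) : A :=
  ((List.range m).map fun i => f (s + 2 * i) + f (s + 2 * i + 2)).prod

@[simp]
lemma adjacentSumProd_zero (f : ℕ → A) (s : ℕ) : adjacentSumProd f s 0 = 1 := rfl

lemma adjacentSumProd_succ (f : ℕ → A) (s m : ℕ) :
    adjacentSumProd f s (m + 1) =
      adjacentSumProd f s m * (f (s + 2 * m) + f (s + 2 * (m + 1))) :=
  List.prod_range_succ _ m

lemma adjacentSumProd_mul_last {f : ℕ → A} (hf : ∀ i, f i * f i = 0) (s m : ℕ) :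
    adjacentSumProd f s m * f (s + 2 * m) = sortedProd f (parityRun s (m + 1)) := by
  induction m with
  | zero => simp [sortedProd_parityRun_succ]
  | succ m ih =>
    rw [adjacentSumProd_succ, mul_add, add_mul, mul_assoc _ (f (s + 2 * (m + 1))), hf, mul_zero,
      add_zero, ih, ← sortedProd_parityRun_succ]

lemma first_mul_adjacentSumProd {f : ℕ → A} (hf : ∀ i, f i * f i = 0) (s m : ℕ) :
    f s * adjacentSumProd f s m = sortedProd f (parityRun s (m + 1)) := by
  induction m with
  | zero => simp [sortedProd_parityRun_succ]
  | succ m ih =>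
    rw [adjacentSumProd_succ, ← mul_assoc, ih, mul_add, ← sortedProd_parityRun_succ,
      sortedProd_parityRun_succ, mul_assoc, hf, mul_zero, zero_add]

lemma deletionSum_parityRun_succ {f : ℕ → A} (hf : ∀ i, f i * f i = 0) (s m : ℕ) :
    deletionSum f (parityRun s (m + 1)) = adjacentSumProd f s m := by
  induction m with
  | zero => simp [parityRun_succ]
  | succ m ih =>
    rw [parityRun_succ, deletionSum_union f (lt_of_mem_parityRun_of_mem_singleton s (m + 1)), ih,
      sortedProd_singleton, deletionSum_singleton, mul_one, ← adjacentSumProd_mul_last hf,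
      adjacentSumProd_succ, mul_add (adjacentSumProd f s m), add_comm]

end ParityRun

section TwoBlocks

lemma mem_oddSet {n x : ℕ} : x ∈ oddSet n ↔ x ∈ Finset.Icc 1 (2 * n) ∧ x % 2 = 1 := by
  simp only [oddSet, Finset.mem_image, Finset.mem_range, Finset.mem_Icc]
  constructor
  · rintro ⟨k, hk, rfl⟩
    omega
  · exact fun hx => ⟨x / 2, by omega, by omega⟩

lemma mem_evenSet {n x : ℕ} : x ∈ evenSet n ↔ x ∈ Finset.Icc 1 (2 * n) ∧ x % 2 = 0 := by
  simp only [evenSet, Finset.mem_image, Finset.mem_range, Finset.mem_Icc]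
  constructor
  · rintro ⟨k, hk, rfl⟩
    omega
  · exact fun hx => ⟨x / 2 - 1, by omega, by omega⟩

lemma oddSet_union_evenSet (n : ℕ) : oddSet n ∪ evenSet n = Finset.Icc 1 (2 * n) := by
  ext x
  rw [Finset.mem_union, mem_oddSet, mem_evenSet]
  have := Nat.mod_two_eq_zero_or_one x
  tauto

lemma isPartitionOf_image {G : Finset ℕ} {f : ℕ → Finset ℕ} (hmem : ∀ x, x ∈ f x)
    (heq : ∀ {x y}, x ∈ f y → f x = f y) (hsub : ∀ x ∈ G, f x ⊆ G) :
    IsPartitionOf G (G.image f) := by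
  refine ⟨?_, ?_, fun x hx => ⟨f x, ⟨Finset.mem_image_of_mem f hx, hmem x⟩, ?_⟩⟩
  · exact Finset.forall_mem_image.mpr fun x _ => ⟨x, hmem x⟩
  · exact Finset.forall_mem_image.mpr hsub
  · rintro B ⟨hB, hxB⟩
    obtain ⟨y, -, rfl⟩ := Finset.mem_image.mp hB
    exact (heq hxB).symm

/-- The block of `x` in the partition with blocks `B₁`, `B₂` and all other points singletons. -/
def blockOf (B₁ B₂ : Finset ℕ) (x : ℕ) : Finset ℕ :=
  if x ∈ B₁ then B₁ else if x ∈ B₂ then B₂ else {x}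

variable {n : ℕ} {B₁ B₂ G I : Finset ℕ}

lemma mem_blockOf (B₁ B₂ : Finset ℕ) (x : ℕ) : x ∈ blockOf B₁ B₂ x := by
  unfold blockOf
  split_ifs <;> simp_all

lemma blockOf_eq_of_mem_blockOf (hdisj : Disjoint B₁ B₂) {x y : ℕ} (hx : x ∈ blockOf B₁ B₂ y) :
    blockOf B₁ B₂ x = blockOf B₁ B₂ y := by
  have := @Finset.disjoint_left _ B₁ B₂
  unfold blockOf at *
  grind

lemma image_blockOf (h₁ : B₁.Nonempty) (h₂ : B₂.Nonempty) (hdisj : Disjoint B₁ B₂)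
    (hG : B₁ ∪ B₂ ⊆ G) :
    G.image (blockOf B₁ B₂) =
      {B₁, B₂} ∪ (G \ (B₁ ∪ B₂)).image fun x => ({x} : Finset ℕ) := by
  obtain ⟨b, hb⟩ := h₁
  obtain ⟨c, hc⟩ := h₂
  have hblock₁ : blockOf B₁ B₂ b = B₁ := if_pos hb
  have hblock₂ : blockOf B₁ B₂ c = B₂ := by
    rw [blockOf, if_neg (Finset.disjoint_right.mp hdisj hc), if_pos hc]
  ext B
  simp only [Finset.mem_image, Finset.mem_union, Finset.mem_insert, Finset.mem_singleton,
    Finset.mem_sdiff]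
  constructor
  · grind [blockOf]
  · rintro ((rfl | rfl) | ⟨x, hx, rfl⟩)
    · exact ⟨b, hG (by simp [hb]), hblock₁⟩
    · exact ⟨c, hG (by simp [hc]), hblock₂⟩
    · exact ⟨x, hx.1, by grind [blockOf]⟩

lemma card_image_blockOf_add (h₁ : B₁.Nonempty) (h₂ : B₂.Nonempty) (hdisj : Disjoint B₁ B₂)
    (hG : B₁ ∪ B₂ ⊆ G) :
    (G.image (blockOf B₁ B₂)).card + (B₁.card + B₂.card) = G.card + 2 := by
  have hne : B₁ ≠ B₂ := fun h => h₁.ne_empty (disjoint_self.mp (h ▸ hdisj))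
  have hsingletons : Disjoint {B₁, B₂} ((G \ (B₁ ∪ B₂)).image fun x => ({x} : Finset ℕ)) := by
    simp only [Finset.disjoint_right, Finset.forall_mem_image, Finset.mem_insert,
      Finset.mem_singleton]
    grind
  rw [image_blockOf h₁ h₂ hdisj hG, Finset.card_union_of_disjoint hsingletons,
    Finset.card_pair hne, Finset.card_image_of_injective _ Finset.singleton_injective,
    ← Finset.card_union_of_disjoint hdisj, add_assoc, Finset.card_sdiff_add_card_eq_card hG,
    add_comm]

lemma nonCrossing_image_blockOf (h : NonCrossing {B₁, B₂}) (G : Finset ℕ) :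
    NonCrossing (G.image (blockOf B₁ B₂)) := by
  intro a b c d hab hbc hcd X hX Y hY ha hc hb hd
  have hXY := h a b c d hab hbc hcd
  simp only [Finset.mem_image] at hX hY
  grind [blockOf]

/-- Disjoint non-crossing blocks `B₁, B₂`, each of a single parity, such that the partition of
`{1,…,2n}` with blocks `B₁`, `B₂` and singletons is a merged partition `(σ|σ̃)`; the last field
encodes that it has `n + 1` blocks. -/
structure TwoBlocks (n : ℕ) (B₁ B₂ : Finset ℕ) : Prop where
  nonempty_left : B₁.Nonempty
  nonempty_right : B₂.Nonempty
  disjoint : Disjoint B₁ B₂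
  union_subset : B₁ ∪ B₂ ⊆ Finset.Icc 1 (2 * n)
  parity_left : ∀ x ∈ B₁, ∀ y ∈ B₁, x % 2 = y % 2
  parity_right : ∀ x ∈ B₂, ∀ y ∈ B₂, x % 2 = y % 2
  nonCrossing : NonCrossing {B₁, B₂}
  card_add_card : B₁.card + B₂.card = n + 1

namespace TwoBlocks

lemma mem_Icc_and_mod_two_eq (h : TwoBlocks n B₁ B₂) {x y : ℕ} (hy : y ∈ Finset.Icc 1 (2 * n))
    (hx : x ∈ blockOf B₁ B₂ y) : x ∈ Finset.Icc 1 (2 * n) ∧ x % 2 = y % 2 := by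
  have hsub := h.union_subset
  have hleft := h.parity_left x
  have hright := h.parity_right x
  unfold blockOf at hx
  grind

lemma isPartitionOf_oddSet (h : TwoBlocks n B₁ B₂) :
    IsPartitionOf (oddSet n) ((oddSet n).image (blockOf B₁ B₂)) := by
  refine isPartitionOf_image (mem_blockOf _ _) (blockOf_eq_of_mem_blockOf h.disjoint) ?_
  intro y hy x hx
  rw [mem_oddSet] at hy ⊢
  obtain ⟨hIcc, hmod⟩ := h.mem_Icc_and_mod_two_eq hy.1 hx
  exact ⟨hIcc, hmod.trans hy.2⟩

lemma isPartitionOf_evenSet (h : TwoBlocks n B₁ B₂) :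
    IsPartitionOf (evenSet n) ((evenSet n).image (blockOf B₁ B₂)) := by
  refine isPartitionOf_image (mem_blockOf _ _) (blockOf_eq_of_mem_blockOf h.disjoint) ?_
  intro y hy x hx
  rw [mem_evenSet] at hy ⊢
  obtain ⟨hIcc, hmod⟩ := h.mem_Icc_and_mod_two_eq hy.1 hx
  exact ⟨hIcc, hmod.trans hy.2⟩

lemma disjoint_image_oddSet_image_evenSet (h : TwoBlocks n B₁ B₂) :
    Disjoint ((oddSet n).image (blockOf B₁ B₂)) ((evenSet n).image (blockOf B₁ B₂)) := by
  rw [Finset.disjoint_left]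
  intro B hB hB'
  obtain ⟨x, hx, rfl⟩ := Finset.mem_image.mp hB
  obtain ⟨y, hy, hyx⟩ := Finset.mem_image.mp hB'
  rw [mem_oddSet] at hx
  rw [mem_evenSet] at hy
  have := (h.mem_Icc_and_mod_two_eq hy.1 (hyx ▸ mem_blockOf B₁ B₂ x)).2
  omega

lemma isNCPair (h : TwoBlocks n B₁ B₂) :
    IsNCPair n ((oddSet n).image (blockOf B₁ B₂)) ((evenSet n).image (blockOf B₁ B₂)) := by
  have hnc := nonCrossing_image_blockOf h.nonCrossing
  refine ⟨h.isPartitionOf_oddSet, hnc _, h.isPartitionOf_evenSet, hnc _, ?_, ?_⟩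
  · rw [← Finset.image_union]
    exact hnc _
  · rw [← Finset.card_union_of_disjoint h.disjoint_image_oddSet_image_evenSet,
      ← Finset.image_union, oddSet_union_evenSet]
    have hcard := card_image_blockOf_add h.nonempty_left h.nonempty_right h.disjoint h.union_subset
    rw [h.card_add_card, Nat.card_Icc] at hcard
    omega

lemma concordantWith_iff (h : TwoBlocks n B₁ B₂) (hI : I ⊆ Finset.Icc 1 (2 * n)) :
    ConcordantWith ((oddSet n).image (blockOf B₁ B₂)) ((evenSet n).image (blockOf B₁ B₂)) I ↔
      ∃ b ∈ B₁, ∃ c ∈ B₂, B₁.erase b ∪ B₂.erase c = I := by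
  have hdisj := Finset.disjoint_left.mp h.disjoint
  simp only [ConcordantWith, ← Finset.image_union, oddSet_union_evenSet,
    image_blockOf h.nonempty_left h.nonempty_right h.disjoint h.union_subset,
    Finset.forall_mem_union, Finset.forall_mem_insert, Finset.mem_singleton, forall_eq,
    Finset.forall_mem_image, Finset.card_eq_one]
  constructor
  · rintro ⟨⟨⟨b, hb⟩, ⟨c, hc⟩⟩, hsingleton⟩
    have hIB : I ⊆ B₁ ∪ B₂ := by
      intro x hx
      by_contra hxB
      obtain ⟨y, hy⟩ := hsingleton (Finset.mem_sdiff.mpr ⟨hI hx, hxB⟩)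
      exact Finset.singleton_ne_empty y (hy ▸ by simpa using hx)
    simp only [Finset.ext_iff, Finset.mem_sdiff, Finset.mem_singleton] at hb hc
    exact ⟨b, ((hb b).mpr rfl).1, c, ((hc c).mpr rfl).1, by grind⟩
  · rintro ⟨b, hb, c, hc, rfl⟩
    exact ⟨⟨⟨b, by grind⟩, ⟨c, by grind⟩⟩, fun x hx => ⟨x, by grind⟩⟩

lemma card_erase_union_erase (h : TwoBlocks n B₁ B₂) {b c : ℕ} (hb : b ∈ B₁) (hc : c ∈ B₂) :
    (B₁.erase b ∪ B₂.erase c).card = n - 1 := by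
  have hdisj : Disjoint (B₁.erase b) (B₂.erase c) :=
    h.disjoint.mono (Finset.erase_subset _ _) (Finset.erase_subset _ _)
  have h₁ := Finset.card_erase_add_one hb
  have h₂ := Finset.card_erase_add_one hc
  have := h.card_add_card
  rw [Finset.card_union_of_disjoint hdisj]
  omega

lemma filter_concordantWith (h : TwoBlocks n B₁ B₂) :
    ((Finset.Icc 1 (2 * n)).powersetCard (n - 1)).filter
        (ConcordantWith ((oddSet n).image (blockOf B₁ B₂)) ((evenSet n).image (blockOf B₁ B₂))) =
      (B₁ ×ˢ B₂).image fun p => B₁.erase p.1 ∪ B₂.erase p.2 := by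
  have hsub : ∀ b c, B₁.erase b ∪ B₂.erase c ⊆ Finset.Icc 1 (2 * n) := fun b c =>
    (Finset.union_subset_union (Finset.erase_subset _ _) (Finset.erase_subset _ _)).trans
      h.union_subset
  ext I
  simp only [Finset.mem_filter, Finset.mem_powersetCard, Finset.mem_image, Finset.mem_product,
    Prod.exists]
  constructor
  · rintro ⟨⟨hI, -⟩, hconc⟩
    obtain ⟨b, hb, c, hc, rfl⟩ := (h.concordantWith_iff hI).mp hconc
    exact ⟨b, c, ⟨hb, hc⟩, rfl⟩
  · rintro ⟨b, c, ⟨hb, hc⟩, rfl⟩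
    exact ⟨⟨hsub b c, h.card_erase_union_erase hb hc⟩,
      (h.concordantWith_iff (hsub b c)).mpr ⟨b, hb, c, hc, rfl⟩⟩

lemma injOn_erase_union_erase (h : TwoBlocks n B₁ B₂) :
    Set.InjOn (fun p : ℕ × ℕ => B₁.erase p.1 ∪ B₂.erase p.2) ↑(B₁ ×ˢ B₂) := by
  have hdisj := Finset.disjoint_left.mp h.disjoint
  rintro ⟨b, c⟩ hbc ⟨b', c'⟩ hbc' heq
  simp only [Finset.coe_product, Set.mem_prod, Finset.mem_coe, Finset.ext_iff] at hbc hbc' heq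
  have hb := heq b
  have hc := heq c
  grind

end TwoBlocks

/-- The degree-one element `e_i` of the exterior algebra of `ℝ^{2n}`. -/
noncomputable def stdι (n i : ℕ) : ExteriorAlgebra ℝ (Fin (2 * n) → ℝ) :=
  ExteriorAlgebra.ι ℝ (stdE n i)

lemma sortedProd_stdι (n : ℕ) (I : Finset ℕ) :
    sortedProd (stdι n) I = listWedge ℝ ((I.sort (· ≤ ·)).map (stdE n)) := by
  rw [listWedge, List.map_map]
  rfl

lemma finsetWedge_eq_sortedProd {k : ℕ} (n : ℕ) (hI : I.card = k) :
    finsetWedge n k I = sortedProd (stdι n) I := by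
  rw [finsetWedge, ιMulti_getD_eq_listWedge_map (stdE n) _ (by simp [hI]), sortedProd_stdι]

lemma TwoBlocks.concVec_eq_sum (h : TwoBlocks n B₁ B₂) :
    concVec n ((oddSet n).image (blockOf B₁ B₂)) ((evenSet n).image (blockOf B₁ B₂)) =
      ∑ b ∈ B₁, ∑ c ∈ B₂, sortedProd (stdι n) (B₁.erase b ∪ B₂.erase c) := by
  rw [concVec, h.filter_concordantWith, Finset.sum_image h.injOn_erase_union_erase,
    Finset.sum_product]
  refine Finset.sum_congr rfl fun b hb => Finset.sum_congr rfl fun c hc => ?_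
  exact finsetWedge_eq_sortedProd n (h.card_erase_union_erase hb hc)

end TwoBlocks

section Nonvanishing

variable {n k : ℕ} {I J : Finset ℕ}

lemma sortedProd_stdι_mul_eq_zero (n : ℕ) (hIJ : ¬ Disjoint I J) :
    sortedProd (stdι n) I * sortedProd (stdι n) J = 0 := by
  obtain ⟨x, hxI, hxJ⟩ := Finset.not_disjoint_iff.mp hIJ
  rw [sortedProd_stdι, sortedProd_stdι, ← listWedge_append]
  apply listWedge_eq_zero_of_not_nodup
  intro hnodup
  exact List.disjoint_of_nodup_append hnodup (List.mem_map_of_mem (by simpa using hxI))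
    (List.mem_map_of_mem (by simpa using hxJ))

lemma map_stdE_ofFn_succ (n : ℕ) :
    (List.ofFn fun t : Fin (2 * n) => t.val + 1).map (stdE n) =
      List.ofFn (Pi.basisFun ℝ (Fin (2 * n))) := by
  rw [List.map_ofFn]
  congr 1
  ext t u
  simp [stdE, Pi.single_apply, Fin.ext_iff]

lemma sort_append_sort_sdiff_perm (hJ : J ⊆ Finset.Icc 1 k) :
    (J.sort (· ≤ ·) ++ (Finset.Icc 1 k \ J).sort (· ≤ ·)).Perm
      (List.ofFn fun t : Fin k => t.val + 1) := by
  rw [List.perm_ext_iff_of_nodup]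
  · intro x
    have hIcc : (∃ t : Fin k, t.val + 1 = x) ↔ x ∈ Finset.Icc 1 k :=
      ⟨by grind, fun hx => ⟨⟨x - 1, by grind⟩, by grind⟩⟩
    simp only [List.mem_append, Finset.mem_sort, List.mem_ofFn, hIcc]
    rw [← Finset.mem_union, Finset.union_sdiff_of_subset hJ]
  · simp only [List.nodup_append, Finset.sort_nodup, Finset.mem_sort, true_and]
    grind
  · exact List.nodup_ofFn.mpr fun s t h => Fin.ext (by simpa using h)

lemma sortedProd_stdι_mul_sdiff_ne_zero (hJ : J ⊆ Finset.Icc 1 (2 * n)) :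
    sortedProd (stdι n) J * sortedProd (stdι n) (Finset.Icc 1 (2 * n) \ J) ≠ 0 := by
  have htop := listWedge_ofFn_basis_ne_zero (Pi.basisFun ℝ (Fin (2 * n)))
  have hperm := (sort_append_sort_sdiff_perm hJ).map (stdE n)
  rw [map_stdE_ofFn_succ] at hperm
  rw [sortedProd_stdι, sortedProd_stdι, ← listWedge_append, ← List.map_append]
  rcases listWedge_eq_or_eq_neg_of_perm (R := ℝ) hperm with h | h <;>
    rw [h]
  · exact htop
  · exact neg_ne_zero.mpr htop

lemma sum_finsetWedge_ne_zero {S : Finset (Finset ℕ)} (hne : S.Nonempty)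
    (hS : S ⊆ (Finset.Icc 1 (2 * n)).powersetCard k) : ∑ I ∈ S, finsetWedge n k I ≠ 0 := by
  obtain ⟨J, hJ⟩ := hne
  intro hsum
  have hmem : ∀ I ∈ S, I ⊆ Finset.Icc 1 (2 * n) ∧ I.card = k := fun I hI =>
    Finset.mem_powersetCard.mp (hS hI)
  refine sortedProd_stdι_mul_sdiff_ne_zero (hmem J hJ).1 ?_
  calc sortedProd (stdι n) J * sortedProd (stdι n) (Finset.Icc 1 (2 * n) \ J)
      = ∑ I ∈ S, finsetWedge n k I * sortedProd (stdι n) (Finset.Icc 1 (2 * n) \ J) := by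
        rw [Finset.sum_eq_single_of_mem J hJ, finsetWedge_eq_sortedProd n (hmem J hJ).2]
        intro I hI hIJ
        rw [finsetWedge_eq_sortedProd n (hmem I hI).2]
        refine sortedProd_stdι_mul_eq_zero n fun hdisj => hIJ ?_
        refine Finset.eq_of_subset_of_card_le (fun x hx => ?_)
          ((hmem J hJ).2.trans (hmem I hI).2.symm).le
        by_contra hxJ
        exact Finset.disjoint_left.mp hdisj hx (Finset.mem_sdiff.mpr ⟨(hmem I hI).1 hx, hxJ⟩)
    _ = 0 := by rw [← Finset.sum_mul, hsum, zero_mul]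

lemma TwoBlocks.concVec_ne_zero {B₁ B₂ : Finset ℕ} (h : TwoBlocks n B₁ B₂) :
    concVec n ((oddSet n).image (blockOf B₁ B₂)) ((evenSet n).image (blockOf B₁ B₂)) ≠ 0 := by
  refine sum_finsetWedge_ne_zero ?_ (Finset.filter_subset _ _)
  rw [h.filter_concordantWith]
  exact (h.nonempty_left.product h.nonempty_right).image _

end Nonvanishing

section ChainVectors

variable {n : ℕ}

lemma sum_alternating_vVec_eq_zero {i c : ℕ} (hi : 1 ≤ i) (hin : i + 2 ≤ 2 * n)
    {u : Fin n → Fin (2 * n)} (hu : ∀ k, (u k).val = 2 * k.val + c) :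
    ∑ k : Fin n, (-1 : ℝ) ^ (k.val + 1) * vVec n i (u k) = 0 := by
  have hc : c ≤ 1 := by
    have hlast := (hu ⟨n - 1, by omega⟩).symm.trans_lt (u _).isLt
    dsimp only at hlast
    omega
  simp only [vVec, Pi.add_apply, stdE, hu]
  by_cases hpar : ∃ a, i = 2 * a + c + 1
  · obtain ⟨a, rfl⟩ := hpar
    rw [Finset.sum_eq_add ⟨a, by omega⟩ ⟨a + 1, by omega⟩ (by simp [Fin.ext_iff])]
    · rw [if_pos rfl, if_neg (by grind), if_neg (by grind), if_pos (by grind)]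
      ring
    · intro k _ hk
      rw [if_neg (by grind), if_neg (by grind)]
      ring
    · simp
    · simp
  · refine Finset.sum_eq_zero fun k _ => ?_
    rw [if_neg fun h => hpar ⟨k, by omega⟩, if_neg fun h => hpar ⟨k - 1, by omega⟩]
    ring

lemma vVec_mem_Vsub {i : ℕ} (hi : 1 ≤ i) (hin : i + 2 ≤ 2 * n) : vVec n i ∈ Vsub n := by
  simp only [Vsub, Submodule.mem_inf, LinearMap.mem_ker, LinearMap.sum_apply, LinearMap.smul_apply,
    LinearMap.proj_apply, smul_eq_mul]
  exact ⟨sum_alternating_vVec_eq_zero (c := 1) hi hin fun _ => rfl,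
    sum_alternating_vVec_eq_zero (c := 0) hi hin fun _ => rfl⟩

/-- The basis vector `v_i` as an element of `V`; the junk value `0` is taken outside
`1 ≤ i ≤ 2n - 2`. -/
noncomputable def basisV (n i : ℕ) : Vsub n :=
  if h : 1 ≤ i ∧ i + 2 ≤ 2 * n then ⟨vVec n i, vVec_mem_Vsub h.1 h.2⟩ else 0

lemma coe_basisV {i : ℕ} (hi : 1 ≤ i) (hin : i + 2 ≤ 2 * n) :
    (basisV n i : Fin (2 * n) → ℝ) = vVec n i := by
  rw [basisV, dif_pos ⟨hi, hin⟩]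

lemma eq_basisV {i : ℕ} (hi : 1 ≤ i) (hin : i + 2 ≤ 2 * n) {x : Vsub n}
    (hx : (x : Fin (2 * n) → ℝ) = vVec n i) : x = basisV n i :=
  Subtype.ext (hx.trans (coe_basisV hi hin).symm)

lemma ι_coe_basisV {i : ℕ} (hi : 1 ≤ i) (hin : i + 2 ≤ 2 * n) :
    ExteriorAlgebra.ι ℝ ((Vsub n).subtype (basisV n i)) = stdι n i + stdι n (i + 2) := by
  rw [Submodule.subtype_apply, coe_basisV hi hin, vVec, map_add, stdι, stdι]

/-- The list `v_s, v_{s+2}, …` of `m` basis vectors of `V` with indices of one parity. -/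
noncomputable def basisVRun (n s m : ℕ) : List (Vsub n) :=
  (List.range m).map fun i => basisV n (s + 2 * i)

@[simp]
lemma length_basisVRun (n s m : ℕ) : (basisVRun n s m).length = m := by
  simp [basisVRun]

lemma basisV_mem_basisVRun {s m i : ℕ} (hsi : s ≤ i) (him : i < s + 2 * m)
    (hpar : i % 2 = s % 2) : basisV n i ∈ basisVRun n s m :=
  List.mem_map.mpr ⟨(i - s) / 2, by simp; omega, by congr 1; omega⟩

lemma basisV_rel_of_pairwise_basisVRun {r : Vsub n → Vsub n → Prop} {s m i j : ℕ}
    (h : (basisVRun n s m).Pairwise r) (hsi : s ≤ i) (hij : i < j) (hjm : j < s + 2 * m)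
    (hi : i % 2 = s % 2) (hj : j % 2 = s % 2) : r (basisV n i) (basisV n j) := by
  rw [basisVRun, List.pairwise_map, List.pairwise_iff_getElem] at h
  have hr := h ((i - s) / 2) ((j - s) / 2) (by simp; omega) (by simp; omega) (by omega)
  simp only [List.getElem_range] at hr
  convert hr using 2 <;> omega

lemma listWedge_map_basisVRun {s m : ℕ} (hs : 1 ≤ s) (hsm : s + 2 * m ≤ 2 * n) :
    listWedge ℝ ((basisVRun n s m).map (Vsub n).subtype) = adjacentSumProd (stdι n) s m := by
  rw [listWedge, adjacentSumProd, basisVRun, List.map_map, List.map_map]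
  congr 1
  refine List.map_congr_left fun i hi => ?_
  rw [List.mem_range] at hi
  exact ι_coe_basisV (by omega) (by omega)

end ChainVectors

section Factorization

variable {n l r : ℕ}

/-- The vectors `X` of `V`, `n - 1` in number, factor a nonzero concordance vector as a wedge. -/
def IsConcordanceFactorization (n : ℕ) (X : List (Vsub n)) : Prop :=
  X.length + 1 = n ∧ ∃ σ σd, IsNCPair n σ σd ∧ concVec n σ σd ≠ 0 ∧
    listWedge ℝ (X.map (Vsub n).subtype) = concVec n σ σd

lemma TwoBlocks.isConcordanceFactorization {B₁ B₂ : Finset ℕ} (h : TwoBlocks n B₁ B₂)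
    {X : List (Vsub n)} (hlength : X.length + 1 = n)
    (hX : listWedge ℝ (X.map (Vsub n).subtype) =
      ∑ b ∈ B₁, ∑ c ∈ B₂, sortedProd (stdι n) (B₁.erase b ∪ B₂.erase c)) :
    IsConcordanceFactorization n X :=
  ⟨hlength, _, _, h.isNCPair, h.concVec_ne_zero, hX.trans h.concVec_eq_sum.symm⟩

lemma stdι_mul_self (n i : ℕ) : stdι n i * stdι n i = 0 := ExteriorAlgebra.ι_sq_zero _

lemma stdι_mul_comm (n i j : ℕ) : stdι n i * stdι n j = -(stdι n j * stdι n i) :=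
  eq_neg_of_add_eq_zero_left (ExteriorAlgebra.ι_add_mul_swap _ _)

lemma nonCrossing_pair {B₁ B₂ : Finset ℕ}
    (h : ∀ a b c d : ℕ, a < b → b < c → c < d →
      ¬ (a ∈ B₁ ∧ b ∈ B₂ ∧ c ∈ B₁ ∧ d ∈ B₂) ∧ ¬ (a ∈ B₂ ∧ b ∈ B₁ ∧ c ∈ B₂ ∧ d ∈ B₁)) :
    NonCrossing {B₁, B₂} := by
  intro a b c d hab hbc hcd X hX Y hY ha hc hb hd
  have hnc := h a b c d hab hbc hcd
  rw [Finset.mem_insert, Finset.mem_singleton] at hX hY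
  rcases hX with rfl | rfl <;> rcases hY with rfl | rfl <;> tauto

lemma twoBlocks_separated (h : l + r + 1 = n) :
    TwoBlocks n (parityRun 1 (l + 1)) (parityRun (2 * l + 2) (r + 1)) where
  nonempty_left := ⟨1, by rw [mem_parityRun]; omega⟩
  nonempty_right := ⟨2 * l + 2, by rw [mem_parityRun]; omega⟩
  disjoint := Finset.disjoint_left.mpr fun x => by simp only [mem_parityRun]; omega
  union_subset := fun x => by simp only [Finset.mem_union, mem_parityRun, Finset.mem_Icc]; omega
  parity_left := by simp only [mem_parityRun]; omega
  parity_right := by simp only [mem_parityRun]; omega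
  nonCrossing := by
    refine nonCrossing_pair fun a b c d => ?_
    simp only [mem_parityRun]
    omega
  card_add_card := by rw [card_parityRun, card_parityRun]; omega

lemma twoBlocks_nested {c : ℕ} (hc : 1 ≤ c) (hc' : c ≤ 2) (h : l + r + 3 = n) :
    TwoBlocks n (parityRun (c + 2 * l + 1) 2)
      (parityRun c (l + 1) ∪ parityRun (c + 2 * l + 4) (r + 1)) where
  nonempty_left := ⟨c + 2 * l + 1, by rw [mem_parityRun]; omega⟩
  nonempty_right := ⟨c, by rw [Finset.mem_union, mem_parityRun]; omega⟩
  disjoint := Finset.disjoint_left.mpr fun x => by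
    simp only [Finset.mem_union, mem_parityRun]; omega
  union_subset := fun x => by simp only [Finset.mem_union, mem_parityRun, Finset.mem_Icc]; omega
  parity_left := by simp only [mem_parityRun]; omega
  parity_right := by simp only [Finset.mem_union, mem_parityRun]; omega
  nonCrossing := by
    refine nonCrossing_pair fun a b c d => ?_
    simp only [Finset.mem_union, mem_parityRun]
    omega
  card_add_card := by
    rw [Finset.card_union_of_disjoint, card_parityRun, card_parityRun, card_parityRun]
    · omega
    · exact Finset.disjoint_left.mpr fun x => by simp only [mem_parityRun]; omega

lemma isConcordanceFactorization_separated (h : l + r + 1 = n) :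
    IsConcordanceFactorization n (basisVRun n 1 l ++ basisVRun n (2 * l + 2) r) := by
  refine (twoBlocks_separated h).isConcordanceFactorization (by simp; omega) ?_
  have hsum := sum_sortedProd_union_erase_nested (stdι n) (L := ∅) (B := parityRun 1 (l + 1))
    (R := parityRun (2 * l + 2) (r + 1)) (by simp) (by simp only [mem_parityRun]; omega) (by simp)
  simp only [Finset.empty_union] at hsum
  rw [hsum, deletionSum_empty, sortedProd_empty, zero_mul, zero_mul, zero_add, one_mul,
    deletionSum_parityRun_succ (stdι_mul_self n), deletionSum_parityRun_succ (stdι_mul_self n),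
    List.map_append, listWedge_append, listWedge_map_basisVRun (by omega) (by omega),
    listWedge_map_basisVRun (by omega) (by omega)]

lemma stdι_mul_add_add_mul_stdι (n a b c d : ℕ) :
    (stdι n b + stdι n c) * stdι n d + stdι n a * (stdι n b + stdι n c) =
      (stdι n a - stdι n d) * (stdι n b + stdι n c) := by
  rw [add_mul, stdι_mul_comm n b, stdι_mul_comm n c]
  noncomm_ring

lemma isConcordanceFactorization_nested {c : ℕ} (hc : 1 ≤ c) (hc' : c ≤ 2) (h : l + r + 3 = n) :
    IsConcordanceFactorization n (basisVRun n c l ++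
      (basisV n (c + 2 * l) - basisV n (c + 2 * l + 2)) :: basisV n (c + 2 * l + 1) ::
        basisVRun n (c + 2 * l + 4) r) := by
  refine (twoBlocks_nested hc hc' h).isConcordanceFactorization (by simp; omega) ?_
  have hsq := stdι_mul_self n
  have hmiddle : ExteriorAlgebra.ι ℝ ((Vsub n).subtype
      (basisV n (c + 2 * l) - basisV n (c + 2 * l + 2))) =
      stdι n (c + 2 * l) - stdι n (c + 2 * l + 4) := by
    rw [map_sub, map_sub, ι_coe_basisV (by omega) (by omega), ι_coe_basisV (by omega) (by omega)]
    abel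
  rw [sum_sortedProd_union_erase_nested, deletionSum_parityRun_succ hsq,
    deletionSum_parityRun_succ hsq, deletionSum_parityRun_succ hsq,
    ← first_mul_adjacentSumProd hsq, ← adjacentSumProd_mul_last hsq, adjacentSumProd_succ,
    adjacentSumProd_zero, one_mul, List.map_append, List.map_cons, List.map_cons, listWedge_append,
    listWedge_cons, listWedge_cons, listWedge_map_basisVRun (by omega) (by omega),
    listWedge_map_basisVRun (by omega) (by omega), hmiddle, ι_coe_basisV (by omega) (by omega)]
  · simp only [mul_zero, zero_add, mul_one, add_zero]
    rw [← mul_assoc (stdι n (c + 2 * l) - _), ← stdι_mul_add_add_mul_stdι]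
    noncomm_ring
  all_goals simp only [mem_parityRun]; omega

end Factorization

section Isotropy

variable {n : ℕ} {ω : Vsub n →ₗ[ℝ] Vsub n →ₗ[ℝ] ℝ}

lemma IsConcordanceFactorization.pairwise_eq_zero (hn : 3 ≤ n)
    {Q : ↥(⋀[ℝ]^(n - 1) ↥(Vsub n)) →ₗ[ℝ] ↥(⋀[ℝ]^(n - 3) ↥(Vsub n))}
    (hQ : IsConvolutionOperator ω Q) (hker : HV n ≤ LinearMap.ker Q) {X : List (Vsub n)}
    (hX : IsConcordanceFactorization n X) :
    X.Pairwise fun x y => ω x y = 0 := by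
  obtain ⟨k, rfl⟩ : ∃ k, n = k + 3 := ⟨n - 3, by omega⟩
  obtain ⟨hlength, σ, σd, hσ, hne, hwedge⟩ := hX
  replace hlength : X.length = k + 2 := by omega
  obtain ⟨x, rfl⟩ : ∃ x : Fin (k + 2) → Vsub (k + 3), X = List.ofFn x :=
    ⟨fun p => X.get ⟨p.val, by lia⟩, List.ext_getElem (by simpa using hlength)
      (by intros; rw [List.getElem_ofFn, List.get_eq_getElem])⟩
  rw [← map_listWedge, listWedge_ofFn] at hwedge
  have hx : ExteriorAlgebra.ιMulti ℝ (k + 2) x ≠ 0 := by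
    intro hzero
    rw [hzero, map_zero] at hwedge
    exact hne hwedge.symm
  have hmem : wedgeIn (k + 2) x ∈ HV (k + 3) := Submodule.subset_span ⟨σ, σd, hσ, hwedge⟩
  exact hQ.pairwise_eq_zero hx (LinearMap.mem_ker.mp (hker hmem))

lemma apply_basisV_eq_zero
    (hω : ∀ X, IsConcordanceFactorization n X → X.Pairwise fun x y => ω x y = 0) {i j : ℕ}
    (hi : 1 ≤ i) (hij : i + 1 < j) (hjn : j + 2 ≤ 2 * n) :
    ω (basisV n i) (basisV n j) = 0 := by
  rcases Nat.even_or_odd' i with ⟨a, rfl | rfl⟩ <;> rcases Nat.even_or_odd' j with ⟨b, rfl | rfl⟩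
  · have h := hω _ (isConcordanceFactorization_separated (l := 0) (r := n - 1) (by omega))
    exact basisV_rel_of_pairwise_basisVRun (List.pairwise_append.mp h).2.1 (by omega) (by omega)
      (by omega) (by omega) (by omega)
  · have h := hω _ (isConcordanceFactorization_nested (c := 1) (l := a - 1) (r := n - a - 2)
      le_rfl (by omega) (by omega))
    rw [List.pairwise_append, List.pairwise_cons, List.pairwise_cons,
      show 1 + 2 * (a - 1) + 1 = 2 * a by omega] at h
    exact h.2.1.2.1 _ (basisV_mem_basisVRun (by omega) (by omega) (by omega))
  · have h := hω _ (isConcordanceFactorization_separated (l := a + 1) (r := n - a - 2) (by omega))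
    exact (List.pairwise_append.mp h).2.2 _
      (basisV_mem_basisVRun (by omega) (by omega) (by omega)) _
      (basisV_mem_basisVRun (by omega) (by omega) (by omega))
  · have h := hω _ (isConcordanceFactorization_separated (l := n - 1) (r := 0) (by omega))
    exact basisV_rel_of_pairwise_basisVRun (List.pairwise_append.mp h).1 (by omega) (by omega)
      (by omega) (by omega) (by omega)

lemma apply_basisV_eq_apply_basisV_add_two
    (hω : ∀ X, IsConcordanceFactorization n X → X.Pairwise fun x y => ω x y = 0) {i : ℕ}
    (hi : 1 ≤ i) (hin : i + 4 ≤ 2 * n) :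
    ω (basisV n i) (basisV n (i + 1)) = ω (basisV n (i + 2)) (basisV n (i + 1)) := by
  obtain ⟨c, l, hc, hc', rfl⟩ : ∃ c l, 1 ≤ c ∧ c ≤ 2 ∧ i = c + 2 * l :=
    ⟨(i - 1) % 2 + 1, (i - 1) / 2, by omega, by omega, by omega⟩
  have h := hω _ (isConcordanceFactorization_nested (l := l) (r := n - l - 3) hc hc' (by omega))
  have hzero := (List.pairwise_cons.mp (List.pairwise_append.mp h).2.1).1 _ List.mem_cons_self
  rwa [map_sub, LinearMap.sub_apply, sub_eq_zero] at hzero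

lemma apply_basisV_succ (hskew : ∀ x y, ω x y = -ω y x)
    (hω : ∀ X, IsConcordanceFactorization n X → X.Pairwise fun x y => ω x y = 0) {i : ℕ}
    (hi : 1 ≤ i) (hin : i + 3 ≤ 2 * n) :
    ω (basisV n i) (basisV n (i + 1)) = (-1) ^ i * -ω (basisV n 1) (basisV n 2) := by
  induction i, hi using Nat.le_induction with
  | base => simp
  | succ i hi ih =>
    calc ω (basisV n (i + 1)) (basisV n (i + 2))
        = -ω (basisV n (i + 2)) (basisV n (i + 1)) := hskew _ _
      _ = -ω (basisV n i) (basisV n (i + 1)) := by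
        rw [apply_basisV_eq_apply_basisV_add_two hω hi (by omega)]
      _ = (-1) ^ (i + 1) * -ω (basisV n 1) (basisV n 2) := by
        rw [ih (by omega)]
        ring

end Isotropy

theorem form_determined_by_concordance (n : ℕ) (hn : 3 ≤ n)
    (ω : ↥(Vsub n) →ₗ[ℝ] ↥(Vsub n) →ₗ[ℝ] ℝ)
    (hskew : ∀ x y, ω x y = - ω y x)
    (Q : ↥(⋀[ℝ]^(n - 1) ↥(Vsub n)) →ₗ[ℝ] ↥(⋀[ℝ]^(n - 3) ↥(Vsub n)))
    (hQ : ∀ x : Fin (n - 1) → ↥(Vsub n),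
      Q (wedgeIn (n - 1) x) =
        ∑ p : Fin (n - 1), ∑ q : Fin (n - 1),
          if p < q then
            ((-1 : ℝ) ^ (p.val + q.val + 1) * ω (x p) (x q)) •
              wedgeIn (n - 3) (fun r : Fin (n - 3) =>
                (((List.ofFn x).eraseIdx q.val).eraseIdx p.val).getD r.val 0)
          else 0)
    (hker : HV n ≤ LinearMap.ker Q) :
    ∃ a : ℝ,
      (∀ i : ℕ, 1 ≤ i → i ≤ 2 * n - 3 → ∀ x y : ↥(Vsub n),
        (x : Fin (2 * n) → ℝ) = vVec n i → (y : Fin (2 * n) → ℝ) = vVec n (i + 1) →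
        ω x y = (-1 : ℝ) ^ i * a) ∧
      (∀ i j : ℕ, 1 ≤ i → i ≤ 2 * n - 2 → j ≤ 2 * n - 2 → i + 1 < j →
        ∀ x y : ↥(Vsub n),
        (x : Fin (2 * n) → ℝ) = vVec n i → (y : Fin (2 * n) → ℝ) = vVec n j →
        ω x y = 0) := by
  have hω : ∀ X, IsConcordanceFactorization n X → X.Pairwise fun x y => ω x y = 0 :=
    fun _ hX => hX.pairwise_eq_zero hn hQ hker
  refine ⟨-ω (basisV n 1) (basisV n 2), ?_, ?_⟩
  · intro i hi hin x y hx hy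
    rw [eq_basisV hi (by omega) hx, eq_basisV (by omega) (by omega) hy]
    exact apply_basisV_succ hskew hω hi (by omega)
  · intro i j hi _ hjn hij x y hx hy
    rw [eq_basisV hi (by omega) hx, eq_basisV (by omega) (by omega) hy]
    exact apply_basisV_eq_zero hω hi hij (by omega)
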